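/- arXiv:2001.09317 — 5 statements merged into one kernel-verified Lean document; each statement's English description precedes it below -/
import Mathlib

section
/- (Lemma 4 of the paper, swap lemma.) With μ_I and μ_II the Case I and Case II schedules built from integers k ≥ 0, k1 ≥ 0, k2 ≥ 1 and a common schedule ν, and T = k + k1 + k2 + 1, we have ∑_{t=1}^{T} A_{μ_I}(t) ≤ ∑_{t=1}^{T} A_{μ_II}(t). -/
/-- The expected Age-of-Information at time-slot `t` under a per-slot
success-probability function `μ : ℤ → ℝ`: the series
`A_μ(t) = ∑_{τ=0}^∞ ∏_{i=0}^{τ-1} (1 − μ(t−i))`, where the `τ = 0` term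
(the empty product) equals 1. -/
noncomputable def aoi (μ : ℤ → ℝ) (t : ℤ) : ℝ :=
  ∑' τ : ℕ, ∏ i ∈ Finset.range τ, (1 - μ (t - (i : ℤ)))

/-- Case I schedule: `ν(s)` for `s ≤ k`; `μ*` in slot `k+1`; the worst channel
`μ_min` in slots `k+2` to `k+k2+1`; the optimal channel `μ*` thereafter
(in particular in slots `k+k2+2` to `T = k+k1+k2+1`). -/
noncomputable def caseI (μmin μstar : ℝ) (ν : ℤ → ℝ) (k k2 : ℕ) : ℤ → ℝ :=
  fun s =>
    if s ≤ (k : ℤ) then ν s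
    else if s = (k : ℤ) + 1 then μstar
    else if s ≤ (k : ℤ) + (k2 : ℤ) + 1 then μmin
    else μstar

/-- Case II schedule: `ν(s)` for `s ≤ k`; the worst channel `μ_min` in slots
`k+1` to `k+k2`; the optimal channel `μ*` thereafter
(in particular in slots `k+k2+1` to `T = k+k1+k2+1`). -/
noncomputable def caseII (μmin μstar : ℝ) (ν : ℤ → ℝ) (k k2 : ℕ) : ℤ → ℝ :=
  fun s =>
    if s ≤ (k : ℤ) then ν s
    else if s ≤ (k : ℤ) + (k2 : ℤ) then μmin
    else μstar

theorem aoi_summable (c : ℝ) (hc : 0 < c) (μ : ℤ → ℝ) (h : ∀ s, c ≤ μ s ∧ μ s ≤ 1) (t : ℤ) :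
    Summable (fun τ : ℕ => ∏ i ∈ Finset.range τ, (1 - μ (t - (i : ℤ)))) := by
  have hc1 : c ≤ 1 := (h 0).1.trans (h 0).2
  refine Summable.of_nonneg_of_le (f := fun τ : ℕ => (1 - c) ^ τ)
    (fun τ => Finset.prod_nonneg fun i _ => by linarith [(h (t - i)).2]) (fun τ => ?_)
    (summable_geometric_of_lt_one (by linarith) (by linarith))
  calc _ ≤ ∏ i ∈ Finset.range τ, (1 - c) :=
        Finset.prod_le_prod (fun i _ => by linarith [(h (t - i)).2])
          (fun i _ => by linarith [(h (t - i)).1])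
    _ = _ := by simp

theorem aoi_rec (c : ℝ) (hc : 0 < c) (μ : ℤ → ℝ) (h : ∀ s, c ≤ μ s ∧ μ s ≤ 1) (t : ℤ) :
    aoi μ (t + 1) = 1 + (1 - μ (t + 1)) * aoi μ t := by
  unfold aoi
  rw [(aoi_summable c hc μ h (t + 1)).tsum_eq_zero_add, ← tsum_mul_left]
  congr 1
  refine tsum_congr fun τ => ?_
  rw [Finset.prod_range_succ', mul_comm]
  congr 1
  · simp
  · refine Finset.prod_congr rfl fun i _ => ?_
    congr 2
    push_cast
    ring

theorem aoi_lower (c d : ℝ) (hc : 0 < c) (hd : d ≤ 1) (μ : ℤ → ℝ)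
    (h : ∀ s, c ≤ μ s ∧ μ s ≤ d) (t : ℤ) (n : ℕ) :
    ∑ r ∈ Finset.range n, (1 - d) ^ r ≤ aoi μ t := by
  have h1 : ∀ s, c ≤ μ s ∧ μ s ≤ 1 := fun s => ⟨(h s).1, (h s).2.trans hd⟩
  refine le_trans (Finset.sum_le_sum fun r _ => ?_)
    ((aoi_summable c hc μ h1 t).sum_le_tsum (Finset.range n)
      (fun τ _ => Finset.prod_nonneg fun i _ => by linarith [(h1 (t - i)).2]))
  calc (1 - d) ^ r = ∏ i ∈ Finset.range r, (1 - d) := by simp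
    _ ≤ _ := Finset.prod_le_prod (fun i _ => by linarith)
          (fun i _ => by linarith [(h (t - i)).2])

theorem swap_abstract (a b x : ℝ) (hb : 0 ≤ b) (hab : b ≤ a) (n k1 : ℕ)
    (hx : ∑ r ∈ Finset.range (k1 + 1), b ^ r ≤ x) (P Q : ℕ → ℝ)
    (hQ0 : Q 0 = x) (hP1 : P 1 = 1 + b * x)
    (hP : ∀ j < n, P (j + 2) = 1 + a * P (j + 1))
    (hP' : ∀ j, n + 1 ≤ j → P (j + 1) = 1 + b * P j)
    (hQ : ∀ j < n, Q (j + 1) = 1 + a * Q j)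
    (hQ' : ∀ j, n ≤ j → Q (j + 1) = 1 + b * Q j) :
    ∑ j ∈ Finset.range (n + 1 + k1), P (j + 1) ≤ ∑ j ∈ Finset.range (n + 1 + k1), Q (j + 1) := by
  let S : ℕ → ℝ := fun m => ∑ j ∈ Finset.range m, a ^ j
  have hS : ∀ m, S (m + 1) = 1 + a * S m := fun m => by
    simp only [S]; rw [geom_sum_succ]; ring
  have hS0 : 0 ≤ S n := Finset.sum_nonneg fun j _ => pow_nonneg (hb.trans hab) j
  have key : ∀ m ≤ n, Q m = x + (1 + a * x - x) * S m ∧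
      P (m + 1) = 1 + b * x + (1 + (a - 1) * (1 + b * x)) * S m ∧
      ∑ j ∈ Finset.range m, Q (j + 1) - ∑ j ∈ Finset.range m, P (j + 2)
        = a * (x - 1 - b * x) * S m := by
    intro m
    induction m with
    | zero => intro _; simp [S, hQ0, hP1]
    | succ m ih =>
      intro hm
      obtain ⟨h1, h2, h3⟩ := ih (by omega)
      have q := hQ m (by omega)
      have p := hP m (by omega)
      refine ⟨?_, ?_, ?_⟩
      · rw [q, h1, hS]; ring
      · rw [p, h2, hS]; ring
      · rw [Finset.sum_range_succ, Finset.sum_range_succ, hS, q, p, h1, h2]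
        linear_combination h3
  obtain ⟨h1, h2, h3⟩ := key n le_rfl
  have tail : ∀ r, Q (n + 1 + r) - P (n + 1 + r) = b ^ r * ((b - a) * S n) := by
    intro r
    induction r with
    | zero => simp only [add_zero]; rw [hQ' n le_rfl, h1, h2]; ring
    | succ r ih =>
      rw [← add_assoc, hQ' _ (by omega), hP' _ (by omega), pow_succ]
      linear_combination b * ih
  have tails : ∑ r ∈ Finset.range k1, Q (n + 1 + r + 1) - ∑ r ∈ Finset.range k1, P (n + 1 + r + 1)
      = (∑ r ∈ Finset.range (k1 + 1), b ^ r - 1) * ((b - a) * S n) := by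
    rw [← Finset.sum_sub_distrib, Finset.sum_range_succ']
    simp only [pow_zero, add_sub_cancel_right]
    rw [Finset.sum_mul]
    exact Finset.sum_congr rfl fun r _ => tail (r + 1)
  have eP : ∑ j ∈ Finset.range (n + 1 + k1), P (j + 1) = (∑ j ∈ Finset.range n, P (j + 2) + P 1)
      + ∑ r ∈ Finset.range k1, P (n + 1 + r + 1) := by
    rw [Finset.sum_range_add _ (n + 1) k1, Finset.sum_range_succ']
  have eQ : ∑ j ∈ Finset.range (n + 1 + k1), Q (j + 1)
      = (∑ j ∈ Finset.range n, Q (j + 1) + Q (n + 1))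
      + ∑ r ∈ Finset.range k1, Q (n + 1 + r + 1) := by
    rw [Finset.sum_range_add _ (n + 1) k1, Finset.sum_range_succ]
  have fin : 0 ≤ (a - b) * S n * (x - ∑ r ∈ Finset.range (k1 + 1), b ^ r) :=
    mul_nonneg (mul_nonneg (by linarith) hS0) (by linarith)
  rw [eP, eQ, hQ' n le_rfl, hP1, h1]
  linarith

theorem sum_Icc_shift (k N : ℕ) (f : ℤ → ℝ) :
    ∑ t ∈ Finset.Icc (1 : ℤ) ((k : ℤ) + N), f t
      = ∑ t ∈ Finset.Icc (1 : ℤ) (k : ℤ), f t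
        + ∑ j ∈ Finset.range N, f ((k : ℤ) + ((j + 1 : ℕ) : ℤ)) := by
  induction N with
  | zero => simp
  | succ N ih =>
    rw [Finset.sum_range_succ, ← add_assoc, ← ih]
    have : Finset.Icc (1 : ℤ) ((k : ℤ) + ((N + 1 : ℕ) : ℤ))
        = insert ((k : ℤ) + ((N + 1 : ℕ) : ℤ)) (Finset.Icc (1 : ℤ) ((k : ℤ) + N)) := by
      ext t
      simp only [Finset.mem_insert, Finset.mem_Icc]
      push_cast
      omega
    rw [this, Finset.sum_insert (by simp), add_comm]

/-- (Lemma 4, swap lemma.) With `μ_I` and `μ_II` the Case I and Case II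
schedules built from integers `k ≥ 0`, `k1 ≥ 0`, `k2 ≥ 1` and a common
schedule `ν`, and `T = k + k1 + k2 + 1`:
`∑_{t=1}^{T} A_{μ_I}(t) ≤ ∑_{t=1}^{T} A_{μ_II}(t)`. -/
theorem stmt_4 (μmin μstar : ℝ) (hμmin_pos : 0 < μmin) (hμ_le : μmin ≤ μstar)
    (hμstar_le : μstar ≤ 1) (k k1 k2 : ℕ) (hk2 : 1 ≤ k2)
    (ν : ℤ → ℝ) (hν : ∀ s : ℤ, μmin ≤ ν s ∧ ν s ≤ μstar) :
    ∑ t ∈ Finset.Icc (1 : ℤ) ((k : ℤ) + k1 + k2 + 1), aoi (caseI μmin μstar ν k k2) t ≤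
      ∑ t ∈ Finset.Icc (1 : ℤ) ((k : ℤ) + k1 + k2 + 1), aoi (caseII μmin μstar ν k k2) t := by
  have hI : ∀ s, μmin ≤ caseI μmin μstar ν k k2 s ∧ caseI μmin μstar ν k k2 s ≤ μstar := by
    intro s
    unfold caseI
    split_ifs
    · exact hν s
    all_goals constructor <;> linarith
  have hII : ∀ s, μmin ≤ caseII μmin μstar ν k k2 s ∧ caseII μmin μstar ν k k2 s ≤ μstar := by
    intro s
    unfold caseII
    split_ifs
    · exact hν s
    all_goals constructor <;> linarith
  have rI := aoi_rec μmin hμmin_pos _ (fun s => ⟨(hI s).1, (hI s).2.trans hμstar_le⟩)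
  have rII := aoi_rec μmin hμmin_pos _ (fun s => ⟨(hII s).1, (hII s).2.trans hμstar_le⟩)
  have heq : ∀ t : ℤ, t ≤ k →
      aoi (caseI μmin μstar ν k k2) t = aoi (caseII μmin μstar ν k k2) t := by
    intro t ht
    unfold aoi
    refine tsum_congr fun τ => Finset.prod_congr rfl fun i _ => ?_
    have : t - (i : ℤ) ≤ k := by omega
    simp [caseI, caseII, this]
  have hT : (k : ℤ) + k1 + k2 + 1 = (k : ℤ) + ((k2 + 1 + k1 : ℕ) : ℤ) := by push_cast; ring
  rw [hT, sum_Icc_shift, sum_Icc_shift]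
  refine add_le_add (Finset.sum_le_sum fun t ht => (heq t (Finset.mem_Icc.1 ht).2).le) ?_
  refine swap_abstract (1 - μmin) (1 - μstar) (aoi (caseII μmin μstar ν k k2) k)
    (by linarith) (by linarith) k2 k1
    (aoi_lower μmin μstar hμmin_pos hμstar_le _ hII k (k1 + 1))
    (fun j => aoi (caseI μmin μstar ν k k2) ((k : ℤ) + (j : ℤ)))
    (fun j => aoi (caseII μmin μstar ν k k2) ((k : ℤ) + (j : ℤ))) (by simp) ?_ ?_ ?_ ?_ ?_
  · have := rI k
    rw [heq k le_rfl] at this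
    simpa [caseI] using this
  · intro j hj
    have := rI (k + (j + 1 : ℕ))
    have e : caseI μmin μstar ν k k2 ((k : ℤ) + (j + 1 : ℕ) + 1) = μmin := by
      unfold caseI
      rw [if_neg (by push_cast; omega), if_neg (by push_cast; omega), if_pos (by push_cast; omega)]
    rw [e] at this
    rw [← this]
    congr 1
  · intro j hj
    have := rI (k + (j : ℕ))
    have e : caseI μmin μstar ν k k2 ((k : ℤ) + (j : ℕ) + 1) = μstar := by
      unfold caseI
      rw [if_neg (by omega), if_neg (by omega), if_neg (by omega)]
    rw [e] at this
    rw [← this]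
    congr 1
  · intro j hj
    have := rII (k + (j : ℕ))
    have e : caseII μmin μstar ν k k2 ((k : ℤ) + (j : ℕ) + 1) = μmin := by
      unfold caseII
      rw [if_neg (by omega), if_pos (by omega)]
    rw [e] at this
    rw [← this]
    congr 1
  · intro j hj
    have := rII (k + (j : ℕ))
    have e : caseII μmin μstar ν k k2 ((k : ℤ) + (j : ℕ) + 1) = μstar := by
      unfold caseII
      rw [if_neg (by omega), if_neg (by omega)]
    rw [e] at this
    rw [← this]
    congr 1
end

section
/- (Equation (8) in the proof of Lemma 4 of the paper.) With μ_I and μ_II the Case I and Case II schedules built from integers k ≥ 0, k1 ≥ 0, k2 ≥ 1 and a common schedule ν, and T = k + k1 + k2 + 1: for every integer m with 0 ≤ m ≤ k1, A_{μ_I}(T−m) − A_{μ_II}(T−m) = (1−μ*)^{k1−m} · μ* · ∑_{j=1}^{k2−1} (1−μ_min)^{j} + (1−μ*)^{k1−m} · ((1−μ_min)^{k2} − (1−μ*)). -/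
theorem aoi_step (c : ℝ) (hc : 0 < c) (μ : ℤ → ℝ) (hμ : ∀ s, c ≤ μ s ∧ μ s ≤ 1) (t : ℤ) :
    aoi μ (t + 1) = 1 + (1 - μ (t + 1)) * aoi μ t := by
  have hc1 : c ≤ 1 := (hμ 0).1.trans (hμ 0).2
  have hs : ∀ t : ℤ, Summable (fun τ : ℕ => ∏ i ∈ Finset.range τ, (1 - μ (t - (i : ℤ)))) := by
    intro t
    refine Summable.of_nonneg_of_le (f := fun τ : ℕ => (1 - c) ^ τ) ?_ ?_
      (summable_geometric_of_lt_one (by linarith) (by linarith))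
    · intro τ
      exact Finset.prod_nonneg (fun i _ => by linarith [(hμ (t - (i : ℤ))).2])
    · intro τ
      calc _ ≤ ∏ i ∈ Finset.range τ, (1 - c) :=
            Finset.prod_le_prod (fun i _ => by linarith [(hμ (t - (i : ℤ))).2])
              (fun i _ => by linarith [(hμ (t - (i : ℤ))).1])
        _ = (1 - c) ^ τ := by simp
  unfold aoi
  rw [(hs (t + 1)).tsum_eq_zero_add, ← tsum_mul_left]
  congr 1
  refine tsum_congr fun τ => ?_
  rw [Finset.prod_range_succ']
  rw [mul_comm]
  congr 1
  · simp
  · refine Finset.prod_congr rfl fun i _ => ?_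
    congr 2
    push_cast
    ring

theorem aoi_const (c : ℝ) (hc : 0 < c) (μ : ℤ → ℝ) (hμ : ∀ s, c ≤ μ s ∧ μ s ≤ 1) (t : ℤ)
    (d : ℝ) (n : ℕ) (h : ∀ s, t < s → s ≤ t + n → μ s = d) :
    aoi μ (t + n) = ∑ j ∈ Finset.range n, (1 - d) ^ j + (1 - d) ^ n * aoi μ t := by
  induction n with
  | zero => simp
  | succ n ih =>
    have e : t + ((n + 1 : ℕ) : ℤ) = (t + n) + 1 := by push_cast; ring
    rw [e, aoi_step c hc μ hμ, ih (fun s h1 h2 => h s h1 (by push_cast; omega)),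
      h (t + n + 1) (by omega) (by push_cast; omega), Finset.sum_range_succ', mul_add,
      Finset.mul_sum]
    simp only [pow_succ]
    have : ∑ i ∈ Finset.range n, (1 - d) * (1 - d) ^ i
        = ∑ i ∈ Finset.range n, (1 - d) ^ i * (1 - d) :=
      Finset.sum_congr rfl fun i _ => mul_comm _ _
    rw [this]
    ring

/-- (Equation (8) in the proof of Lemma 4.) With `μ_I`, `μ_II` the Case I and
Case II schedules built from `k ≥ 0`, `k1 ≥ 0`, `k2 ≥ 1` and a common schedule
`ν`, and `T = k + k1 + k2 + 1`: for every `m` with `0 ≤ m ≤ k1`,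
`A_{μ_I}(T−m) − A_{μ_II}(T−m)
  = (1−μ*)^{k1−m} μ* ∑_{j=1}^{k2−1} (1−μ_min)^j
    + (1−μ*)^{k1−m} ((1−μ_min)^{k2} − (1−μ*))`. -/
theorem stmt_5 (μmin μstar : ℝ) (hμmin_pos : 0 < μmin) (hμ_le : μmin ≤ μstar)
    (hμstar_le : μstar ≤ 1) (k k1 k2 : ℕ) (hk2 : 1 ≤ k2)
    (ν : ℤ → ℝ) (hν : ∀ s : ℤ, μmin ≤ ν s ∧ ν s ≤ μstar)
    (m : ℕ) (hm : m ≤ k1) :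
    aoi (caseI μmin μstar ν k k2) ((k : ℤ) + k1 + k2 + 1 - m) -
        aoi (caseII μmin μstar ν k k2) ((k : ℤ) + k1 + k2 + 1 - m) =
      (1 - μstar) ^ (k1 - m) * μstar *
          (∑ j ∈ Finset.Icc 1 (k2 - 1), (1 - μmin) ^ j) +
        (1 - μstar) ^ (k1 - m) * ((1 - μmin) ^ k2 - (1 - μstar)) := by
  have hI : ∀ s, μmin ≤ caseI μmin μstar ν k k2 s ∧ caseI μmin μstar ν k k2 s ≤ 1 := by
    intro s
    have := hν s
    unfold caseI
    split_ifs <;> constructor <;> linarith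
  have hII : ∀ s, μmin ≤ caseII μmin μstar ν k k2 s ∧ caseII μmin μstar ν k k2 s ≤ 1 := by
    intro s
    have := hν s
    unfold caseII
    split_ifs <;> constructor <;> linarith
  have h0 : aoi (caseI μmin μstar ν k k2) k = aoi (caseII μmin μstar ν k k2) k := by
    unfold aoi
    refine tsum_congr fun τ => Finset.prod_congr rfl fun i _ => ?_
    have : (k : ℤ) - (i : ℤ) ≤ k := by omega
    simp [caseI, caseII]
  have a1 := aoi_const μmin hμmin_pos _ hI k μstar 1 (fun s h1 h2 => by
    unfold caseI
    rw [if_neg (by omega), if_pos (by push_cast at h2; omega)])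
  have a2 := aoi_const μmin hμmin_pos _ hI (k + (1 : ℕ)) μmin k2 (fun s h1 h2 => by
    push_cast at h1 h2
    unfold caseI
    rw [if_neg (by omega), if_neg (by omega), if_pos (by omega)])
  have a3 := aoi_const μmin hμmin_pos _ hI (k + (1 : ℕ) + k2) μstar (k1 - m) (fun s h1 h2 => by
    push_cast at h1
    unfold caseI
    rw [if_neg (by omega), if_neg (by omega), if_neg (by omega)])
  have b1 := aoi_const μmin hμmin_pos _ hII k μmin k2 (fun s h1 h2 => by
    unfold caseII
    rw [if_neg (by omega), if_pos (by omega)])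
  have b2 := aoi_const μmin hμmin_pos _ hII (k + k2) μstar 1 (fun s h1 h2 => by
    unfold caseII
    rw [if_neg (by omega), if_neg (by omega)])
  have b3 := aoi_const μmin hμmin_pos _ hII (k + k2 + (1 : ℕ)) μstar (k1 - m) (fun s h1 h2 => by
    push_cast at h1
    unfold caseII
    rw [if_neg (by omega), if_neg (by omega)])
  have e1 : (k : ℤ) + k1 + k2 + 1 - m = k + (1 : ℕ) + k2 + (k1 - m : ℕ) := by
    push_cast [hm]; ring
  have e2 : (k : ℤ) + k1 + k2 + 1 - m = k + k2 + (1 : ℕ) + (k1 - m : ℕ) := by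
    push_cast [hm]; ring
  have hS : ∑ j ∈ Finset.range k2, (1 - μmin) ^ j
      = 1 + ∑ j ∈ Finset.Icc 1 (k2 - 1), (1 - μmin) ^ j := by
    obtain ⟨n, rfl⟩ : ∃ n, k2 = n + 1 := ⟨k2 - 1, by omega⟩
    rw [Finset.range_eq_Ico, Finset.sum_eq_sum_Ico_succ_bot (by omega)]
    simp only [pow_zero, Nat.add_sub_cancel, zero_add]
    congr 1
  rw [show aoi (caseI μmin μstar ν k k2) ((k : ℤ) + k1 + k2 + 1 - m) = _ from
      (congrArg _ e1).trans a3,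
    show aoi (caseII μmin μstar ν k k2) ((k : ℤ) + k1 + k2 + 1 - m) = _ from
      (congrArg _ e2).trans b3, a2, a1, b2, b1, h0, hS]
  simp only [Finset.sum_range_one, pow_zero, pow_one]
  ring
end

section
/- (Equation (16) in the proof of Lemma 6 of the paper, expected AoI under Schedule B.) Let μ_min, μ* ∈ (0,1], let n ∈ ℤ, and let the function μ : ℤ → ℝ satisfy μ(s) = μ_min for all s ≤ n and μ(s) = μ* for all s ≥ n+1. Then for every t ≥ n+1, A_μ(t) = (1 − (1−μ*)^{t−n+1})/μ* + (1−μ*)^{t−n} (1−μ_min)/μ_min. -/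
/-- (Equation (16) in the proof of Lemma 6: expected AoI under Schedule B.)
Let `μ_min, μ* ∈ (0,1]`, `n ∈ ℤ`, and let `μ : ℤ → ℝ` satisfy `μ(s) = μ_min`
for all `s ≤ n` and `μ(s) = μ*` for all `s ≥ n+1`. Then for every `t ≥ n+1`,
`A_μ(t) = (1 − (1−μ*)^{t−n+1})/μ* + (1−μ*)^{t−n} (1−μ_min)/μ_min`. -/
theorem stmt_9 (μmin μstar : ℝ) (hμmin_pos : 0 < μmin) (hμmin_le : μmin ≤ 1)
    (hμstar_pos : 0 < μstar) (hμstar_le : μstar ≤ 1) (n : ℤ)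
    (μ : ℤ → ℝ) (hlo : ∀ s : ℤ, s ≤ n → μ s = μmin)
    (hhi : ∀ s : ℤ, n + 1 ≤ s → μ s = μstar)
    (t : ℤ) (ht : n + 1 ≤ t) :
    aoi μ t =
      (1 - (1 - μstar) ^ (t - n + 1).toNat) / μstar +
        (1 - μstar) ^ (t - n).toNat * ((1 - μmin) / μmin) := by
  obtain ⟨m, rfl⟩ : ∃ m : ℕ, t = n + m := ⟨(t - n).toNat, by omega⟩
  have e1 : (n + (m : ℤ) - n + 1).toNat = m + 1 := by omega
  have e2 : (n + (m : ℤ) - n).toNat = m := by omega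
  rw [e1, e2]
  unfold aoi
  have hA : ∀ k : ℕ, k ≤ m →
      ∏ i ∈ Finset.range k, (1 - μ (n + (m : ℤ) - (i : ℤ))) = (1 - μstar) ^ k := by
    intro k hk
    rw [Finset.prod_congr rfl (g := fun _ => 1 - μstar)]
    · simp
    · intro i hi
      rw [Finset.mem_range] at hi
      rw [hhi _ (by omega)]
  have hB : ∀ k : ℕ,
      ∏ i ∈ Finset.range (k + (m + 1)), (1 - μ (n + (m : ℤ) - (i : ℤ)))
        = (1 - μstar) ^ m * (1 - μmin) * (1 - μmin) ^ k := by
    intro k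
    rw [show k + (m + 1) = m + (k + 1) by ring, Finset.prod_range_add, hA m le_rfl,
      Finset.prod_congr rfl (g := fun _ => 1 - μmin)]
    · simp [pow_succ]
      ring
    · intro i hi
      rw [hlo _ (by push_cast; omega)]
  have hg := (hasSum_geometric_of_lt_one (r := 1 - μmin) (by linarith) (by linarith)).mul_left
    ((1 - μstar) ^ m * (1 - μmin))
  have hs : HasSum (fun k : ℕ =>
      ∏ i ∈ Finset.range (k + (m + 1)), (1 - μ (n + (m : ℤ) - (i : ℤ))))
      ((1 - μstar) ^ m * (1 - μmin) * (1 - (1 - μmin))⁻¹) := by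
    simpa only [hB] using hg
  have h := (hasSum_nat_add_iff (m + 1)
    (f := fun τ : ℕ => ∏ i ∈ Finset.range τ, (1 - μ (n + (m : ℤ) - (i : ℤ))))).1 hs
  rw [h.tsum_eq, Finset.sum_congr rfl
    (fun k hk => hA k (by rw [Finset.mem_range] at hk; omega)),
    geom_sum_eq (by linarith)]
  have h1 : μstar ≠ 0 := hμstar_pos.ne'
  have h2 : μmin ≠ 0 := hμmin_pos.ne'
  rw [show 1 - (1 - μmin) = μmin by ring, show 1 - μstar - 1 = -μstar by ring]
  field_simp
  ring
end

section
/- (Lemma 6 of the paper, deterministic-schedule form.) Fix reals μ_min and μ* with 0 < μ_min ≤ μ* ≤ 1, let μ : ℤ → ℝ be a schedule (μ_min ≤ μ(s) ≤ μ* for all s), let T ≥ 1 be an integer, and let n = #{t ∈ {1, …, T} : μ(t) ≠ μ*} be the number of slots in {1, …, T} in which a sub-optimal channel is used. Then ∑_{t=1}^{T} A_μ(t) ≤ T/μ* + (1−μ*)/(μ* μ_min) + (1/μ_min − 1/μ*) · n. -/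
lemma aoi_prod_bound (μmin : ℝ) (μ : ℤ → ℝ) (h : ∀ s : ℤ, μmin ≤ μ s ∧ μ s ≤ 1) (t : ℤ) (k : ℕ) :
    0 ≤ ∏ i ∈ Finset.range k, (1 - μ (t - (i : ℤ))) ∧
      ∏ i ∈ Finset.range k, (1 - μ (t - (i : ℤ))) ≤ (1 - μmin) ^ k := by
  constructor
  · exact Finset.prod_nonneg fun i _ => by linarith [(h (t - i)).2]
  · calc _ ≤ ∏ i ∈ Finset.range k, (1 - μmin) :=
          Finset.prod_le_prod (fun i _ => by linarith [(h (t - i)).2])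
            (fun i _ => by linarith [(h (t - i)).1])
      _ = _ := by simp

lemma aoi_facts (μmin : ℝ) (h0 : 0 < μmin) (μ : ℤ → ℝ) (h : ∀ s : ℤ, μmin ≤ μ s ∧ μ s ≤ 1) (t : ℤ) :
    0 ≤ aoi μ t ∧ aoi μ t ≤ 1 / μmin ∧ aoi μ t = 1 + (1 - μ t) * aoi μ (t - 1) := by
  have h1 : 0 ≤ 1 - μmin := by linarith [(h 0).1, (h 0).2]
  have hg : Summable fun k : ℕ => (1 - μmin) ^ k :=
    summable_geometric_of_lt_one h1 (by linarith)
  have hs : ∀ t : ℤ, Summable fun k : ℕ => ∏ i ∈ Finset.range k, (1 - μ (t - (i : ℤ))) := fun t =>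
    Summable.of_nonneg_of_le (fun k => (aoi_prod_bound μmin μ h t k).1)
      (fun k => (aoi_prod_bound μmin μ h t k).2) hg
  refine ⟨tsum_nonneg fun k => (aoi_prod_bound μmin μ h t k).1, ?_, ?_⟩
  · calc aoi μ t ≤ ∑' k : ℕ, (1 - μmin) ^ k :=
          (hs t).tsum_le_tsum (fun k => (aoi_prod_bound μmin μ h t k).2) hg
      _ = 1 / μmin := by
          rw [tsum_geometric_of_lt_one h1 (by linarith)]; simp
  · unfold aoi
    rw [(hs t).tsum_eq_zero_add, ← tsum_mul_left]
    congr 1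
    congr 1
    funext k
    rw [Finset.prod_range_succ', mul_comm]
    congr 1
    · simp
    · refine Finset.prod_congr rfl fun i _ => ?_
      congr 2
      push_cast
      ring

/-- (Lemma 6, deterministic-schedule form.) Fix `0 < μ_min ≤ μ* ≤ 1`, let `μ`
be a schedule, `T ≥ 1`, and let `n` be the number of slots in `{1,…,T}` in
which a sub-optimal channel is used. Then
`∑_{t=1}^{T} A_μ(t) ≤ T/μ* + (1−μ*)/(μ* μ_min) + (1/μ_min − 1/μ*) n`. -/
theorem stmt_11 (μmin μstar : ℝ) (hμmin_pos : 0 < μmin) (hμ_le : μmin ≤ μstar)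
    (hμstar_le : μstar ≤ 1)
    (μ : ℤ → ℝ) (hμ : ∀ s : ℤ, μmin ≤ μ s ∧ μ s ≤ μstar)
    (T : ℕ) (hT : 1 ≤ T)
    (n : ℕ) (hn : n = ((Finset.Icc (1 : ℤ) (T : ℤ)).filter (fun t => μ t ≠ μstar)).card) :
    ∑ t ∈ Finset.Icc (1 : ℤ) (T : ℤ), aoi μ t ≤
      (T : ℝ) / μstar + (1 - μstar) / (μstar * μmin) + (1 / μmin - 1 / μstar) * n := by
  have hM : 0 < μstar := by linarith
  have F := aoi_facts μmin hμmin_pos μ (fun s => ⟨(hμ s).1, (hμ s).2.trans hμstar_le⟩)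
  have step : ∀ t : ℤ, aoi μ t + (1 - μstar) / μstar * aoi μ t ≤
      (1 - μstar) / μstar * aoi μ (t - 1) + 1 / μstar +
        (1 / μmin - 1 / μstar) * (if μ t ≠ μstar then 1 else 0) := by
    intro t
    obtain ⟨_, _, h3⟩ := F t
    obtain ⟨g1, g2, _⟩ := F (t - 1)
    have e : aoi μ t + (1 - μstar) / μstar * aoi μ t = aoi μ t / μstar := by
      field_simp
      ring
    rw [e, h3]
    split_ifs with hc
    · have k1 : (μstar - μ t) * aoi μ (t - 1) ≤ (μstar - μmin) * (1 / μmin) :=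
        mul_le_mul (by linarith [(hμ t).1]) g2 g1 (by linarith)
      have k2 : (μstar - μmin) * (1 / μmin) = μstar * (1 / μmin) - 1 := by
        field_simp
      have k3 : (1 + (1 - μ t) * aoi μ (t - 1)) ≤
          (1 - μstar) * aoi μ (t - 1) + μstar * (1 / μmin) := by linarith
      calc _ ≤ ((1 - μstar) * aoi μ (t - 1) + μstar * (1 / μmin)) / μstar := by gcongr
        _ = _ := by
          field_simp
          ring
    · have : μ t = μstar := not_not.mp hc
      rw [this]
      apply le_of_eq
      field_simp
      ring
  have key : ∀ N : ℕ, ∑ t ∈ Finset.Icc (1 : ℤ) (N : ℤ), aoi μ t + (1 - μstar) / μstar * aoi μ N ≤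
      (1 - μstar) / μstar * aoi μ 0 + N * (1 / μstar) + (1 / μmin - 1 / μstar) *
        ∑ t ∈ Finset.Icc (1 : ℤ) (N : ℤ), (if μ t ≠ μstar then (1 : ℝ) else 0) := by
    intro N
    induction N with
    | zero => simp
    | succ N ih =>
      have hI : Finset.Icc (1 : ℤ) ((N + 1 : ℕ) : ℤ) =
          insert ((N : ℤ) + 1) (Finset.Icc (1 : ℤ) (N : ℤ)) := by
        ext x
        simp only [Finset.mem_Icc, Finset.mem_insert]
        push_cast
        omega
      have hnot : ((N : ℤ) + 1) ∉ Finset.Icc (1 : ℤ) (N : ℤ) := by simp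
      rw [hI, Finset.sum_insert hnot, Finset.sum_insert hnot]
      have := step ((N : ℤ) + 1)
      rw [add_sub_cancel_right] at this
      push_cast
      linarith
  have hk := key T
  have hn' : (n : ℝ) = ∑ t ∈ Finset.Icc (1 : ℤ) (T : ℤ), (if μ t ≠ μstar then (1 : ℝ) else 0) := by
    rw [hn, Finset.sum_boole]
  rw [← hn'] at hk
  have hc : 0 ≤ (1 - μstar) / μstar := div_nonneg (by linarith) hM.le
  have p1 := mul_nonneg hc (F T).1
  have p2 := mul_le_mul_of_nonneg_left (F 0).2.1 hc
  have p3 : (1 - μstar) / μstar * (1 / μmin) = (1 - μstar) / (μstar * μmin) := by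
    field_simp
  have p4 : (T : ℝ) * (1 / μstar) = T / μstar := by ring
  linarith
end

section
/- (Equation 'age_in_the_good_case' in the proof of Lemma 6 for Q-policies.) Fix reals μ_min and μ* with 0 < μ_min ≤ μ* ≤ 1, let μ : ℤ → ℝ be a schedule (μ_min ≤ μ(s) ≤ μ* for all s), let L ≥ 0 be an integer, and let t ∈ ℤ. If μ(s) = μ* for all s with t−L+1 ≤ s ≤ t, then A_μ(t) ≤ 1/μ* + (1−μ*)^{L}/μ_min. -/
/-- ('age_in_the_good_case' in the proof of Lemma 6 for Q-policies.)
Fix `0 < μ_min ≤ μ* ≤ 1`, let `μ` be a schedule, `L ≥ 0` an integer, `t ∈ ℤ`.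
If `μ(s) = μ*` for all `s` with `t−L+1 ≤ s ≤ t`, then
`A_μ(t) ≤ 1/μ* + (1−μ*)^L/μ_min`. -/
theorem stmt_12 (μmin μstar : ℝ) (hμmin_pos : 0 < μmin) (hμ_le : μmin ≤ μstar)
    (hμstar_le : μstar ≤ 1)
    (μ : ℤ → ℝ) (hμ : ∀ s : ℤ, μmin ≤ μ s ∧ μ s ≤ μstar)
    (L : ℕ) (t : ℤ)
    (hopt : ∀ s : ℤ, t - (L : ℤ) + 1 ≤ s → s ≤ t → μ s = μstar) :
    aoi μ t ≤ 1 / μstar + (1 - μstar) ^ L / μmin := by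
  have h0 : ∀ s, 0 ≤ 1 - μ s := fun s => by linarith [(hμ s).2]
  have hm0 : 0 ≤ 1 - μmin := by linarith
  have hm1 : 1 - μmin < 1 := by linarith
  have hs0 : 0 ≤ 1 - μstar := by linarith
  have hs1 : 1 - μstar < 1 := by linarith
  have hbound : ∀ (u : ℤ) (k : ℕ),
      ∏ i ∈ Finset.range k, (1 - μ (u - (i : ℤ))) ≤ (1 - μmin) ^ k := by
    intro u k
    calc _ ≤ ∏ i ∈ Finset.range k, (1 - μmin) :=
          Finset.prod_le_prod (fun i _ => h0 _) (fun i _ => by linarith [(hμ (u - (i : ℤ))).1])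
      _ = _ := by simp
  have hgood : ∀ k : ℕ, k ≤ L →
      ∏ i ∈ Finset.range k, (1 - μ (t - (i : ℤ))) = (1 - μstar) ^ k := by
    intro k hk
    rw [Finset.prod_congr rfl (g := fun _ => 1 - μstar)]
    · simp
    · intro i hi
      have := Finset.mem_range.mp hi
      rw [hopt (t - (i : ℤ)) (by omega) (by omega)]
  have hgm := summable_geometric_of_lt_one hm0 hm1
  have hgs := summable_geometric_of_lt_one hs0 hs1
  have hsum : Summable (fun τ : ℕ => ∏ i ∈ Finset.range τ, (1 - μ (t - (i : ℤ)))) :=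
    Summable.of_nonneg_of_le (fun k => Finset.prod_nonneg fun i _ => h0 _) (hbound t) hgm
  have hshift := (summable_nat_add_iff L).2 hsum
  have hmul : Summable (fun k : ℕ => (1 - μstar) ^ L * (1 - μmin) ^ k) := hgm.mul_left _
  unfold aoi
  rw [← hsum.sum_add_tsum_nat_add L]
  apply add_le_add
  · calc _ = ∑ k ∈ Finset.range L, (1 - μstar) ^ k :=
          Finset.sum_congr rfl fun k hk => hgood k (Finset.mem_range.mp hk).le
      _ ≤ ∑' k : ℕ, (1 - μstar) ^ k := hgs.sum_le_tsum _ (fun k _ => pow_nonneg hs0 k)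
      _ = 1 / μstar := by rw [tsum_geometric_of_lt_one hs0 hs1]; simp
  · calc _ ≤ ∑' k : ℕ, (1 - μstar) ^ L * (1 - μmin) ^ k := by
          refine Summable.tsum_le_tsum (fun k => ?_) hshift hmul
          rw [add_comm k L, Finset.prod_range_add, hgood L le_rfl]
          refine mul_le_mul_of_nonneg_left ?_ (pow_nonneg hs0 L)
          refine le_trans (le_of_eq ?_) (hbound (t - L) k)
          refine Finset.prod_congr rfl fun i _ => ?_
          push_cast
          rw [sub_sub t]
      _ = (1 - μstar) ^ L / μmin := by
          rw [tsum_mul_left, tsum_geometric_of_lt_one hm0 hm1]; simp [div_eq_mul_inv]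
end
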